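/- Let G be a finite group acting on ℝ³ by homeomorphisms (a continuous action of G on EuclideanSpace ℝ (Fin 3)) such that the action is free: if g · x = x for some x ∈ ℝ³ then g is the identity. Then G is the trivial group. Equivalently, any group acting freely and properly discontinuously by homeomorphisms on ℝ³ is torsion-free. -/

import Mathlib

/-!
It suffices to treat a group `G` of prime order, generated by `γ`, acting freely on a contractible
space `X` that embeds in some `ℝᵏ`.

A contraction of `X` to a point, conjugated by the elements of `G`, gives an equivariant map to `X`
from the join of any number of copies of `G`. The join carries, up to any prescribed degree, the
image of the periodic resolution of `ℤ` over `ℤ[G]`. Barycentric subdivision makes the simplices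
arbitrarily small, so `X` contains such an image with simplices as small as we like.

Label a point of `X` by the coordinates that oscillate most along its orbit, and for each of them by
the places in the orbit where it is maximal. Labels are equivariant, take values in the finite poset
of families of subsets of `G`, and can only decrease from a point to its neighbours. As the action
is free, the union of the labels of a small simplex is a nonempty proper family, hence has trivial
stabilizer because `G` has prime order. Small simplices therefore map to chains of the order
complex on whose vertices `G` acts freely. That complex has finite dimension, so descending along
the periodic resolution from a degree in which it has no simplices shows that the augmentation `1`
is divisible by the order of `G`.
-/

namespace FiniteFreeAction

open scoped Pointwise

noncomputable section

section Chains

variable {X Y Z A : Type*} [AddCommGroup A]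

/-- Augmented ordered chains on a set of vertices: a list of length `n + 1` is an ordered
`n`-simplex, repetitions being allowed, and `[]` is the simplex of dimension `-1`. Simplices of all
dimensions live in one group, so that the boundary is an endomorphism. -/
abbrev OrderedChain (Y : Type*) := List Y →₀ ℤ

/-- The cone operator, which adds a new first vertex to every simplex. -/
def cone (v : Y) : OrderedChain Y →ₗ[ℤ] OrderedChain Y := Finsupp.lmapDomain ℤ ℤ (List.cons v)

/-- The alternating sum of the faces of a simplex. -/
def faces : List Y → OrderedChain Y
  | [] => 0
  | v :: t => Finsupp.single t 1 - cone v (faces t)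

/-- The boundary operator of augmented ordered chains. -/
def boundary : OrderedChain Y →ₗ[ℤ] OrderedChain Y := Finsupp.linearCombination ℤ faces

/-- The chain map induced by a map of vertices. -/
def pushforward (f : Y → Z) : OrderedChain Y →ₗ[ℤ] OrderedChain Z :=
  Finsupp.lmapDomain ℤ ℤ (List.map f)

/-- The chains all of whose simplices belong to a given set. -/
abbrev chainsOn (S : Set (List Y)) : Submodule ℤ (OrderedChain Y) := Finsupp.supported ℤ ℤ S

@[simp] lemma cone_single (v : Y) (l : List Y) (n : ℤ) :
    cone v (Finsupp.single l n) = Finsupp.single (v :: l) n := by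
  simp [cone]

@[simp] lemma boundary_single (l : List Y) : boundary (Finsupp.single l 1) = faces l := by
  simp [boundary]

@[simp] lemma pushforward_single (f : Y → Z) (l : List Y) (n : ℤ) :
    pushforward f (Finsupp.single l n) = Finsupp.single (l.map f) n := by
  simp [pushforward]

lemma chain_hom_ext {φ ψ : OrderedChain Y →ₗ[ℤ] A}
    (h : ∀ l, φ (Finsupp.single l 1) = ψ (Finsupp.single l 1)) : φ = ψ :=
  Finsupp.lhom_ext' fun l => LinearMap.ext_ring (h l)

lemma map_mem_of_mem_chainsOn {S : Set (List Y)} {T : Submodule ℤ A} (φ : OrderedChain Y →ₗ[ℤ] A)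
    (h : ∀ l ∈ S, φ (Finsupp.single l 1) ∈ T) {z : OrderedChain Y} (hz : z ∈ chainsOn S) :
    φ z ∈ T := by
  have hle : chainsOn S ≤ T.comap φ := by
    rw [chainsOn, Finsupp.supported_eq_span_single, Submodule.span_le]
    rintro _ ⟨l, hl, rfl⟩
    exact h l hl
  exact hle hz

lemma eq_of_mem_chainsOn {S : Set (List Y)} {φ ψ : OrderedChain Y →ₗ[ℤ] A}
    (h : ∀ l ∈ S, φ (Finsupp.single l 1) = ψ (Finsupp.single l 1)) {z : OrderedChain Y}
    (hz : z ∈ chainsOn S) : φ z = ψ z :=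
  LinearMap.mem_eqLocus.1 <| map_mem_of_mem_chainsOn (T := LinearMap.eqLocus φ ψ) LinearMap.id h hz

lemma cone_mem_chainsOn {S T : Set (List Y)} {v : Y} (h : ∀ l ∈ S, v :: l ∈ T)
    {z : OrderedChain Y} (hz : z ∈ chainsOn S) : cone v z ∈ chainsOn T :=
  map_mem_of_mem_chainsOn _
    (fun l hl => by simpa using Finsupp.single_mem_supported ℤ 1 (h l hl)) hz

lemma pushforward_mem_chainsOn {S : Set (List Y)} {T : Set (List Z)} {f : Y → Z}
    (h : ∀ l ∈ S, l.map f ∈ T) {z : OrderedChain Y} (hz : z ∈ chainsOn S) :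
    pushforward f z ∈ chainsOn T :=
  map_mem_of_mem_chainsOn _
    (fun l hl => by simpa using Finsupp.single_mem_supported ℤ 1 (h l hl)) hz

lemma faces_mem_chainsOn (l : List Y) :
    faces l ∈ chainsOn {t | t.Sublist l ∧ t.length + 1 = l.length} := by
  induction l with
  | nil => exact Submodule.zero_mem _
  | cons v t ih =>
    refine Submodule.sub_mem _ (Finsupp.single_mem_supported ℤ 1 ?_)
      (cone_mem_chainsOn (fun s hs => ?_) ih)
    · exact ⟨List.sublist_cons_self v t, rfl⟩
    · exact ⟨hs.1.cons_cons v, congrArg (· + 1) hs.2⟩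

lemma boundary_mem_chainsOn {S T : Set (List Y)}
    (h : ∀ l ∈ S, ∀ t, t.Sublist l → t.length + 1 = l.length → t ∈ T) {z : OrderedChain Y}
    (hz : z ∈ chainsOn S) : boundary z ∈ chainsOn T := by
  refine map_mem_of_mem_chainsOn boundary (fun l hl => ?_) hz
  rw [boundary_single]
  exact Finsupp.supported_mono (fun t ht => h l hl t ht.1 ht.2) (faces_mem_chainsOn l)

lemma boundary_cone (v : Y) (z : OrderedChain Y) :
    boundary (cone v z) = z - cone v (boundary z) := by
  have h : boundary ∘ₗ cone v = LinearMap.id - cone v ∘ₗ boundary :=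
    chain_hom_ext fun l => by simp [faces]
  exact LinearMap.congr_fun h z

lemma boundary_faces (l : List Y) : boundary (faces l) = 0 := by
  induction l with
  | nil => simp [faces]
  | cons v t ih => simp [faces, boundary_cone, ih]

lemma boundary_boundary (z : OrderedChain Y) : boundary (boundary z) = 0 := by
  have h : boundary ∘ₗ boundary = (0 : OrderedChain Y →ₗ[ℤ] OrderedChain Y) :=
    chain_hom_ext fun l => by simp [boundary_faces]
  exact LinearMap.congr_fun h z

lemma pushforward_cone (f : Y → Z) (v : Y) (z : OrderedChain Y) :
    pushforward f (cone v z) = cone (f v) (pushforward f z) := by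
  have h : pushforward f ∘ₗ cone v = cone (f v) ∘ₗ pushforward f :=
    chain_hom_ext fun l => by simp
  exact LinearMap.congr_fun h z

lemma pushforward_faces (f : Y → Z) (l : List Y) : pushforward f (faces l) = faces (l.map f) := by
  induction l with
  | nil => simp [faces]
  | cons v t ih => simp [faces, pushforward_cone, ih]

lemma pushforward_boundary (f : Y → Z) (z : OrderedChain Y) :
    pushforward f (boundary z) = boundary (pushforward f z) := by
  have h : pushforward f ∘ₗ boundary = boundary ∘ₗ pushforward f :=
    chain_hom_ext fun l => by simp [pushforward_faces]
  exact LinearMap.congr_fun h z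

lemma pushforward_pushforward (f : Y → Z) (g : X → Y) (z : OrderedChain X) :
    pushforward f (pushforward g z) = pushforward (f ∘ g) z := by
  have h : pushforward f ∘ₗ pushforward g = pushforward (f ∘ g) :=
    chain_hom_ext fun l => by simp
  exact LinearMap.congr_fun h z

lemma pushforward_congr {S : Set (List Y)} {f g : Y → Z} (h : ∀ l ∈ S, ∀ y ∈ l, f y = g y)
    {z : OrderedChain Y} (hz : z ∈ chainsOn S) : pushforward f z = pushforward g z :=
  eq_of_mem_chainsOn (fun l hl => by simp [List.map_congr_left (h l hl)]) hz

end Chains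

section Subdivision

variable {Y Y' Z Z' : Type*}

/-- The subdivision of a simplex with a chosen centre `b` for each simplex, by recursion on the
number of vertices (the first argument). -/
def subdivideSimplex (b : List Y → Z) : ℕ → List Y → OrderedChain Z
  | 0, _ => Finsupp.single [] 1
  | n + 1, l => cone (b l) (Finsupp.linearCombination ℤ (subdivideSimplex b n) (faces l))

/-- The subdivision operator: each simplex `l` is replaced by the cone, with apex the centre `b l`,
over the subdivision of its faces. Centres may live in another set of vertices, which gives
barycentric subdivision as well as maps to the order complex of a poset. -/
def subdivision (b : List Y → Z) : OrderedChain Y →ₗ[ℤ] OrderedChain Z :=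
  Finsupp.linearCombination ℤ fun l => subdivideSimplex b l.length l

@[simp] lemma subdivision_nil (b : List Y → Z) :
    subdivision b (Finsupp.single [] 1) = Finsupp.single [] 1 := by
  simp [subdivision, subdivideSimplex]

lemma subdivision_single (b : List Y → Z) {l : List Y} (hl : l ≠ []) :
    subdivision b (Finsupp.single l 1) = cone (b l) (subdivision b (faces l)) := by
  obtain ⟨v, t, rfl⟩ := List.exists_cons_of_ne_nil hl
  rw [subdivision, Finsupp.linearCombination_single, one_smul, List.length_cons, subdivideSimplex]
  congr 1
  refine eq_of_mem_chainsOn (fun s hs => ?_) (faces_mem_chainsOn (v :: t))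
  have hlen : s.length = t.length := by simpa using hs.2
  simp [hlen]

lemma boundary_subdivision (b : List Y → Z) (z : OrderedChain Y) :
    boundary (subdivision b z) = subdivision b (boundary z) := by
  suffices h : ∀ (n : ℕ) (l : List Y), l.length = n →
      boundary (subdivision b (Finsupp.single l 1)) = subdivision b (faces l) by
    have h' : boundary ∘ₗ subdivision b = subdivision b ∘ₗ boundary :=
      chain_hom_ext fun l => by simpa using h _ l rfl
    exact LinearMap.congr_fun h' z
  intro n
  induction n with
  | zero => rintro l hl; simp [List.length_eq_zero_iff.1 hl, faces]
  | succ n ih =>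
    intro l hl
    have hfaces : boundary (subdivision b (faces l)) = subdivision b (boundary (faces l)) := by
      refine eq_of_mem_chainsOn (φ := boundary ∘ₗ subdivision b) (ψ := subdivision b ∘ₗ boundary)
        (fun t ht => ?_) (faces_mem_chainsOn l)
      simpa using ih t (by have := ht.2; omega)
    rw [subdivision_single b (List.length_pos_iff.1 (by omega)), boundary_cone, hfaces,
      boundary_faces, map_zero, map_zero, sub_zero]

lemma subdivision_pushforward {b : List Y → Z} {b' : List Y' → Z'} {f : Y → Y'} {f' : Z → Z'}
    (h : ∀ l, b' (l.map f) = f' (b l)) (z : OrderedChain Y) :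
    subdivision b' (pushforward f z) = pushforward f' (subdivision b z) := by
  suffices h : ∀ (n : ℕ) (l : List Y), l.length = n →
      subdivision b' (Finsupp.single (l.map f) 1) =
        pushforward f' (subdivision b (Finsupp.single l 1)) by
    have h' : subdivision b' ∘ₗ pushforward f = pushforward f' ∘ₗ subdivision b :=
      chain_hom_ext fun l => by simpa using h _ l rfl
    exact LinearMap.congr_fun h' z
  intro n
  induction n with
  | zero => rintro l hl; simp [List.length_eq_zero_iff.1 hl]
  | succ n ih =>
    intro l hl
    have hl' : l ≠ [] := List.length_pos_iff.1 (by omega)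
    rw [subdivision_single b hl', subdivision_single b' (by simpa using hl'), pushforward_cone, h,
      ← pushforward_faces]
    congr 1
    refine eq_of_mem_chainsOn (φ := subdivision b' ∘ₗ pushforward f)
      (ψ := pushforward f' ∘ₗ subdivision b) (fun t ht => ?_) (faces_mem_chainsOn l)
    simpa using ih t (by have := ht.2; omega)

lemma subdivision_single_mem_chainsOn {b : List Y → Z} {R : List Y → List Z → Prop}
    (nil : R [] [])
    (cons : ∀ l s t, l ≠ [] → s.Sublist l → s.length + 1 = l.length → R s t → R l (b l :: t))
    (l : List Y) : subdivision b (Finsupp.single l 1) ∈ chainsOn {t | R l t} := by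
  induction hn : l.length generalizing l with
  | zero =>
    rw [List.length_eq_zero_iff.1 hn, subdivision_nil]
    exact Finsupp.single_mem_supported ℤ 1 nil
  | succ n ih =>
    have hl : l ≠ [] := List.length_pos_iff.1 (by omega)
    rw [subdivision_single b hl]
    refine cone_mem_chainsOn
      (S := {t | ∃ s, s.Sublist l ∧ s.length + 1 = l.length ∧ R s t})
      (fun t ⟨s, hs, hlen, hst⟩ => cons l s t hl hs hlen hst)
      (map_mem_of_mem_chainsOn _ (fun s hs => ?_) (faces_mem_chainsOn l))
    have hss : {t | R s t} ⊆ {t | ∃ s, s.Sublist l ∧ s.length + 1 = l.length ∧ R s t} :=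
      fun t ht => ⟨s, hs.1, hs.2, ht⟩
    exact Finsupp.supported_mono hss (ih s (by have := hs.2; omega))

lemma subdivision_mem_chainsOn {b : List Y → Z} {R : List Y → List Z → Prop} (nil : R [] [])
    (cons : ∀ l s t, l ≠ [] → s.Sublist l → s.length + 1 = l.length → R s t → R l (b l :: t))
    {S : Set (List Y)} {T : Set (List Z)} (h : ∀ l ∈ S, ∀ t, R l t → t ∈ T) {z : OrderedChain Y}
    (hz : z ∈ chainsOn S) : subdivision b z ∈ chainsOn T :=
  map_mem_of_mem_chainsOn _ (fun l hl => Finsupp.supported_mono (h l hl)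
    (subdivision_single_mem_chainsOn nil cons l)) hz

end Subdivision

section Periodic

variable {k G M N : Type*} [CommRing k] [Group G] [AddCommGroup M] [Module k M]
  [AddCommGroup N] [Module k N] {ρ : Representation k G M} {γ : G} {S : Submodule k M}

lemma exists_sub_eq_of_mem_powers (hρ : ∀ g, ∀ x ∈ S, ρ g x ∈ S) {g : G}
    (hg : g ∈ Submonoid.powers γ) {x : M} (hx : x ∈ S) : ∃ z ∈ S, ρ g x - x = ρ γ z - z := by
  obtain ⟨j, rfl⟩ := hg
  induction j with
  | zero => exact ⟨0, S.zero_mem, by simp⟩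
  | succ j ih =>
    obtain ⟨z, hz, h⟩ := ih
    refine ⟨z + ρ (γ ^ j) x, S.add_mem hz (hρ _ x hx), ?_⟩
    simp only [pow_succ' γ j, map_mul, Module.End.mul_apply, map_add] at h ⊢
    rw [add_sub_add_comm, ← h]
    abel

variable [Fintype G]

/-- The action on a representation of the differentials of the periodic resolution of a finite
cyclic group with generator `γ`: alternately `γ - 1`, in even degrees, and the norm. -/
def periodic (ρ : Representation k G M) (γ : G) (n : ℕ) : Module.End k M :=
  if Even n then ρ γ - 1 else ρ.norm

lemma periodic_of_even {n : ℕ} (hn : Even n) (x : M) : periodic ρ γ n x = ρ γ x - x := by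
  simp [periodic, hn]

lemma periodic_of_not_even {n : ℕ} (hn : ¬Even n) (x : M) : periodic ρ γ n x = ρ.norm x := by
  simp [periodic, hn]

lemma periodic_succ_succ (n : ℕ) : periodic ρ γ (n + 2) = periodic ρ γ n := by
  simp [periodic, Nat.even_add]

lemma periodic_succ_periodic (n : ℕ) (x : M) : periodic ρ γ (n + 1) (periodic ρ γ n x) = 0 := by
  by_cases hn : Even n
  · rw [periodic_of_even hn, periodic_of_not_even (by simpa [Nat.even_add_one] using hn), map_sub,
      Representation.norm_self_apply, sub_self]
  · rw [periodic_of_not_even hn, periodic_of_even (Nat.even_add_one.2 hn),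
      Representation.self_norm_apply, sub_self]

lemma map_periodic {σ : Representation k G N} {φ : M →ₗ[k] N} {x : M}
    (h : ∀ g, φ (ρ g x) = σ g (φ x)) (n : ℕ) : φ (periodic ρ γ n x) = periodic σ γ n (φ x) := by
  by_cases hn : Even n
  · rw [periodic_of_even hn, periodic_of_even hn, map_sub, h]
  · simp [periodic_of_not_even hn, Representation.norm, h]

lemma periodic_mem {S : Submodule k M} {x : M} (h : ∀ g, ρ g x ∈ S) (n : ℕ) :
    periodic ρ γ n x ∈ S := by
  have hx : x ∈ S := by simpa using h 1
  by_cases hn : Even n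
  · rw [periodic_of_even hn]
    exact S.sub_mem (h γ) hx
  · rw [periodic_of_not_even hn, Representation.norm, LinearMap.sum_apply]
    exact S.sum_mem fun g _ => h g

/- An invariant `x` is the norm of `π x`; if the norm of `x` vanishes, subtracting `π` of it from
the trace formula leaves `x = ∑ g, (g - 1) (π (g⁻¹ x))`. -/
lemma exists_eq_periodic_succ_of_trace_eq (hγ : ∀ g, g ∈ Subgroup.zpowers γ)
    (hρ : ∀ g, ∀ x ∈ S, ρ g x ∈ S) {π : Module.End k M} (hπ : ∀ x ∈ S, π x ∈ S) {x : M}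
    (htrace : ∑ g, ρ g (π (ρ g⁻¹ x)) = x) (hx : x ∈ S) {n : ℕ} (h0 : periodic ρ γ n x = 0) :
    ∃ z ∈ S, x = periodic ρ γ (n + 1) z := by
  by_cases hn : Even n
  · have hfix : ∀ g, ρ g x = x := by
      intro g
      obtain ⟨j, rfl⟩ := mem_powers_iff_mem_zpowers.2 (hγ g)
      rw [periodic_of_even hn, sub_eq_zero] at h0
      induction j with
      | zero => simp
      | succ j ih => simpa [pow_succ, h0] using ih
    refine ⟨π x, hπ x hx, ?_⟩
    rw [periodic_of_not_even (by simpa [Nat.even_add_one] using hn), Representation.norm,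
      LinearMap.sum_apply]
    simpa [hfix] using htrace.symm
  · rw [periodic_of_not_even hn] at h0
    choose z hzS hz using fun g =>
      exists_sub_eq_of_mem_powers hρ (mem_powers_iff_mem_zpowers.2 (hγ g)) (hπ _ (hρ g⁻¹ x hx))
    refine ⟨∑ g, z g, S.sum_mem fun g _ => hzS g, ?_⟩
    have hnorm : ∑ g, ρ g⁻¹ x = 0 :=
      (Equiv.sum_comp (Equiv.inv G) (ρ · x)).trans (by simpa [Representation.norm] using h0)
    calc x = ∑ g, (ρ g (π (ρ g⁻¹ x)) - π (ρ g⁻¹ x)) := by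
          rw [Finset.sum_sub_distrib, htrace, ← map_sum, hnorm, map_zero, sub_zero]
      _ = periodic ρ γ (n + 1) (∑ g, z g) := by
          simp [periodic_of_even (Nat.even_add_one.2 hn), hz]

end Periodic

section Towers

variable {G Y Z : Type*} [Group G] [MulAction G Y] [MulAction G Z]

/-- The representation on ordered chains induced by an action on the vertices. -/
def chainRep : Representation ℤ G (OrderedChain Y) where
  toFun g := pushforward (g • ·)
  map_one' := chain_hom_ext fun l => by simp
  map_mul' g h := chain_hom_ext fun l => by simp [mul_smul, Function.comp_def]

lemma chainRep_apply (g : G) (z : OrderedChain Y) : chainRep g z = pushforward (g • ·) z := rfl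

@[simp] lemma chainRep_single (g : G) (l : List Y) (n : ℤ) :
    chainRep g (Finsupp.single l n) = Finsupp.single (l.map (g • ·)) n :=
  pushforward_single _ l n

lemma boundary_chainRep (g : G) (z : OrderedChain Y) :
    boundary (chainRep g z) = chainRep g (boundary z) :=
  (pushforward_boundary _ z).symm

variable [Fintype G]

lemma boundary_periodic (γ : G) (n : ℕ) (z : OrderedChain Y) :
    boundary (periodic chainRep γ n z) = periodic chainRep γ n (boundary z) :=
  map_periodic (fun g => boundary_chainRep g z) n

/-- Chains `c 0, …, c m` linked by the differentials of the periodic resolution: this is an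
augmentation-preserving chain map from that resolution, truncated at degree `m`, recorded by the
images of its generators. -/
def IsTower (γ : G) (m : ℕ) (c : ℕ → OrderedChain Y) : Prop :=
  boundary (c 0) = Finsupp.single [] 1 ∧
    ∀ n < m, boundary (c (n + 1)) = periodic chainRep γ n (c n)

lemma IsTower.map {γ : G} {m : ℕ} {c : ℕ → OrderedChain Y} (hc : IsTower γ m c)
    {φ : OrderedChain Y →ₗ[ℤ] OrderedChain Z} (hnil : φ (Finsupp.single [] 1) = Finsupp.single [] 1)
    (hbd : ∀ n ≤ m, boundary (φ (c n)) = φ (boundary (c n)))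
    (hequiv : ∀ n ≤ m, ∀ g : G, φ (chainRep g (c n)) = chainRep g (φ (c n))) :
    IsTower γ m fun n => φ (c n) := by
  refine ⟨by rw [hbd 0 m.zero_le, hc.1, hnil], fun n hn => ?_⟩
  rw [hbd _ hn, hc.2 n hn, map_periodic (hequiv n hn.le)]

end Towers

section Obstruction

variable {G V : Type*} [Group G] [MulAction G V]

lemma exists_map_smul_eq_mul (G V : Type*) [Group G] [MulAction G V] :
    ∃ κ : V → G, ∀ v, MulAction.stabilizer G v = ⊥ → ∀ g : G, κ (g • v) = g * κ v := by
  let rep : V → V := fun v => (Quotient.mk (MulAction.orbitRel G V) v).out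
  have hrep : ∀ v, ∃ h : G, h • rep v = v := fun v =>
    MulAction.mem_orbit_symm.1 (MulAction.orbitRel_apply.1 (Quotient.mk_out v))
  choose κ hκ using hrep
  refine ⟨κ, fun v hv g => ?_⟩
  have hrep_smul : rep (g • v) = rep v :=
    congrArg Quotient.out (Quotient.sound (MulAction.orbitRel_apply.2 (MulAction.mem_orbit v g)))
  have hfix : (g * κ v)⁻¹ * κ (g • v) ∈ MulAction.stabilizer G (rep v) := by
    rw [MulAction.mem_stabilizer_iff, mul_smul, inv_smul_eq_iff, mul_smul, hκ v, ← hrep_smul, hκ]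
  rw [← inv_smul_eq_iff.2 (hκ v).symm, MulAction.stabilizer_smul_eq_stabilizer_map_conj, hv,
    Subgroup.map_bot, Subgroup.mem_bot, inv_mul_eq_one] at hfix
  exact hfix.symm

variable (G V) in
/-- The simplices of dimension `n` with distinct vertices on each of which `G` acts freely. -/
def freeSimplices (n : ℕ) : Set (List V) :=
  {l | l.length = n + 1 ∧ l.Nodup ∧ ∀ v ∈ l, MulAction.stabilizer G v = ⊥}

lemma chainRep_mem_freeSimplices (g : G) {n : ℕ} {z : OrderedChain V}
    (hz : z ∈ chainsOn (freeSimplices G V n)) : chainRep g z ∈ chainsOn (freeSimplices G V n) := by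
  refine pushforward_mem_chainsOn (fun l hl => ?_) hz
  obtain ⟨hlen, hnd, hfree⟩ := hl
  refine ⟨by simpa using hlen, hnd.map (MulAction.injective g), fun w hw => ?_⟩
  obtain ⟨v, hv, rfl⟩ := List.mem_map.1 hw
  rw [MulAction.stabilizer_smul_eq_stabilizer_map_conj, hfree v hv, Subgroup.map_bot]

lemma boundary_mem_freeSimplices {n : ℕ} {z : OrderedChain V}
    (hz : z ∈ chainsOn (freeSimplices G V (n + 1))) :
    boundary z ∈ chainsOn (freeSimplices G V n) := by
  refine boundary_mem_chainsOn (fun l hl t ht htlen => ?_) hz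
  obtain ⟨hlen, hnd, hfree⟩ := hl
  exact ⟨by omega, hnd.sublist ht, fun v hv => hfree v (ht.subset hv)⟩

lemma eq_zero_of_mem_freeSimplices [Finite V] {n : ℕ} (hn : Nat.card V ≤ n) {z : OrderedChain V}
    (hz : z ∈ chainsOn (freeSimplices G V n)) : z = 0 := by
  have := Fintype.ofFinite V
  have hempty : freeSimplices G V n = ∅ := by
    refine Set.eq_empty_of_forall_notMem fun l ⟨hlen, hnd, _⟩ => ?_
    have := hnd.length_le_card
    rw [Nat.card_eq_fintype_card] at hn
    omega
  simpa [hempty, Finsupp.supported_empty] using hz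

variable [Fintype G]

/- The projection keeps the simplices whose first vertex has trivial coordinate. -/
lemma exists_trace_eq (n : ℕ) : ∃ π : Module.End ℤ (OrderedChain V),
    (∀ z ∈ chainsOn (freeSimplices G V n), π z ∈ chainsOn (freeSimplices G V n)) ∧
    ∀ z ∈ chainsOn (freeSimplices G V n), ∑ g : G, chainRep g (π (chainRep g⁻¹ z)) = z := by
  classical
  obtain ⟨κ, hκ⟩ := exists_map_smul_eq_mul G V
  let π : Module.End ℤ (OrderedChain V) := Finsupp.linearCombination ℤ fun l =>
    if l.head?.map κ = some 1 then Finsupp.single l 1 else 0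
  refine ⟨π, fun z hz => map_mem_of_mem_chainsOn π (fun l hl => ?_) hz, fun z hz => ?_⟩
  · simp only [π, Finsupp.linearCombination_single, one_smul]
    split
    exacts [Finsupp.single_mem_supported ℤ 1 hl, Submodule.zero_mem _]
  · suffices h : (∑ g : G, chainRep g * π * chainRep g⁻¹ : Module.End ℤ (OrderedChain V)) z = z by
      simpa using h
    refine eq_of_mem_chainsOn (ψ := LinearMap.id) (fun l hl => ?_) hz
    obtain ⟨v, t, rfl⟩ := List.exists_cons_of_length_eq_add_one hl.1
    have hv : ∀ g : G, κ (g⁻¹ • v) = 1 ↔ κ v = g := fun g => by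
      rw [hκ v (hl.2.2 v (by simp)), inv_mul_eq_one, eq_comm]
    simp [π, hv, apply_ite, Function.comp_def]

lemma exists_eq_periodic_succ {γ : G} (hγ : ∀ g, g ∈ Subgroup.zpowers γ) {k n : ℕ}
    {z : OrderedChain V} (hz : z ∈ chainsOn (freeSimplices G V k))
    (h0 : periodic chainRep γ n z = 0) :
    ∃ y ∈ chainsOn (freeSimplices G V k), z = periodic chainRep γ (n + 1) y := by
  obtain ⟨π, hπ, htrace⟩ := exists_trace_eq (G := G) (V := V) k
  exact exists_eq_periodic_succ_of_trace_eq hγ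
    (fun g _ => chainRep_mem_freeSimplices g) hπ (htrace z hz) hz h0

lemma IsTower.exists_eq_boundary_add_periodic [Finite V] {γ : G}
    (hγ : ∀ g, g ∈ Subgroup.zpowers γ) {m : ℕ} (hm : Nat.card V ≤ m) {c : ℕ → OrderedChain V}
    (hc : IsTower γ m c) (hfree : ∀ n ≤ m, c n ∈ chainsOn (freeSimplices G V n)) {n : ℕ}
    (hn : n ≤ m) : ∃ y ∈ chainsOn (freeSimplices G V (n + 1)),
      ∃ z ∈ chainsOn (freeSimplices G V n), c n = boundary y + periodic chainRep γ (n + 1) z := by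
  induction hn using Nat.decreasingInduction with
  | self =>
    exact ⟨0, Submodule.zero_mem _, 0, Submodule.zero_mem _,
      by simp [eq_zero_of_mem_freeSimplices hm (hfree m le_rfl)]⟩
  | of_succ n hn ih =>
    obtain ⟨y, -, z, hz, hyz⟩ := ih
    have hcycle : periodic chainRep γ n (c n - boundary z) = 0 := by
      rw [map_sub, ← hc.2 n hn, hyz, map_add, boundary_boundary, boundary_periodic,
        periodic_succ_succ, zero_add, sub_self]
    obtain ⟨z', hz', h⟩ := exists_eq_periodic_succ hγ
      (Submodule.sub_mem _ (hfree n hn.le) (boundary_mem_freeSimplices hz)) hcycle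
    exact ⟨z, hz, z', hz', by rw [← h, add_sub_cancel]⟩

lemma norm_chainRep_apply_nil (z : OrderedChain V) :
    (chainRep (G := G)).norm z [] = Fintype.card G * z [] := by
  have h : ∀ g : G, chainRep g z [] = z [] := fun g =>
    Finsupp.mapDomain_apply (List.map_injective_iff.2 (MulAction.injective g)) z []
  simp [Representation.norm, h, Finsupp.finsetSum_apply]

theorem IsTower.card_eq_one [Finite V] {γ : G} (hγ : ∀ g, g ∈ Subgroup.zpowers γ) {m : ℕ}
    (hm : Nat.card V ≤ m) {c : ℕ → OrderedChain V} (hc : IsTower γ m c)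
    (hfree : ∀ n ≤ m, c n ∈ chainsOn (freeSimplices G V n)) : Fintype.card G = 1 := by
  obtain ⟨y, -, z, -, hyz⟩ :=
    hc.exists_eq_boundary_add_periodic hγ hm hfree (Nat.zero_le m)
  have haug : (Fintype.card G : ℤ) * boundary z [] = 1 := by
    have h : Finsupp.single [] 1 = (chainRep (G := G)).norm (boundary z) := by
      rw [← hc.1, hyz, map_add, boundary_boundary, zero_add, boundary_periodic,
        periodic_of_not_even (by decide)]
    rw [← norm_chainRep_apply_nil, ← h, Finsupp.single_eq_same]
  have := Int.eq_one_or_neg_one_of_mul_eq_one haug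
  omega

end Obstruction

section Normalization

variable {V : Type*} [PartialOrder V]

open Classical in
/-- The projection of ordered chains of a poset that kills the degenerate simplices, keeping those
whose vertices strictly decrease. -/
def normalize : OrderedChain V →ₗ[ℤ] OrderedChain V :=
  Finsupp.linearCombination ℤ fun l =>
    if l.Pairwise (· > ·) then Finsupp.single l 1 else 0

lemma normalize_single_of_pairwise {l : List V} (hl : l.Pairwise (· > ·)) :
    normalize (Finsupp.single l 1) = Finsupp.single l 1 := by
  simp [normalize, hl]

lemma normalize_single_of_not_pairwise {l : List V} (hl : ¬l.Pairwise (· > ·)) :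
    normalize (Finsupp.single l 1) = 0 := by
  simp [normalize, hl]

lemma normalize_mem_chainsOn {S : Set (List V)} {z : OrderedChain V} (hz : z ∈ chainsOn S) :
    normalize z ∈ chainsOn {l | l ∈ S ∧ l.Pairwise (· > ·)} := by
  refine map_mem_of_mem_chainsOn normalize (fun l hl => ?_) hz
  by_cases hl' : l.Pairwise (· > ·)
  · rw [normalize_single_of_pairwise hl']
    exact Finsupp.single_mem_supported ℤ 1 ⟨hl, hl'⟩
  · rw [normalize_single_of_not_pairwise hl']
    exact Submodule.zero_mem _

lemma normalize_cone_normalize (v : V) (z : OrderedChain V) :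
    normalize (cone v (normalize z)) = normalize (cone v z) := by
  suffices h : normalize ∘ₗ cone v ∘ₗ normalize = normalize ∘ₗ cone v from LinearMap.congr_fun h z
  refine chain_hom_ext fun l => ?_
  by_cases hl : l.Pairwise (· > ·)
  · simp [normalize_single_of_pairwise hl]
  · have hcons : ¬(v :: l).Pairwise (· > ·) := fun h => hl h.of_cons
    simp [normalize_single_of_not_pairwise hl, normalize_single_of_not_pairwise hcons]

lemma normalize_cone_cone (v : V) (z : OrderedChain V) : normalize (cone v (cone v z)) = 0 := by
  suffices h : normalize ∘ₗ cone v ∘ₗ cone v = 0 from LinearMap.congr_fun h z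
  refine chain_hom_ext fun l => ?_
  have hcons : ¬(v :: v :: l).Pairwise (· > ·) := by simp
  simp [normalize_single_of_not_pairwise hcons]

lemma normalize_faces_of_not_pairwise {l : List V} (hle : l.Pairwise (· ≥ ·))
    (hlt : ¬l.Pairwise (· > ·)) : normalize (faces l) = 0 := by
  induction l with
  | nil => exact absurd List.Pairwise.nil hlt
  | cons v t ih =>
    by_cases ht : t.Pairwise (· > ·)
    · cases t with
      | nil => exact absurd (List.pairwise_singleton _ v) hlt
      | cons w s =>
        have hvw : v = w := by
          by_contra hne
          have hlt' : v > w := lt_of_le_of_ne (hle.rel_head (by simp)) (Ne.symm hne)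
          exact hlt (List.pairwise_cons_cons_iff_of_trans.2 ⟨hlt', ht⟩)
        subst hvw
        simp [faces, normalize_cone_cone]
    · rw [faces, map_sub, normalize_single_of_not_pairwise ht, ← normalize_cone_normalize,
        ih hle.of_cons ht, map_zero, map_zero, sub_zero]

lemma boundary_normalize {z : OrderedChain V} (hz : z ∈ chainsOn {l | l.Pairwise (· ≥ ·)}) :
    boundary (normalize z) = normalize (boundary z) := by
  suffices h : ∀ l ∈ {l : List V | l.Pairwise (· ≥ ·)},
      (boundary ∘ₗ normalize) (Finsupp.single l 1) =
        (normalize ∘ₗ boundary) (Finsupp.single l 1) from eq_of_mem_chainsOn h hz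
  intro l hle
  by_cases hlt : l.Pairwise (· > ·)
  · have hfaces : normalize (faces l) = LinearMap.id (faces l) :=
      eq_of_mem_chainsOn (fun t ht => normalize_single_of_pairwise (hlt.sublist ht.1))
        (faces_mem_chainsOn l)
    simp [normalize_single_of_pairwise hlt, hfaces]
  · simp [normalize_single_of_not_pairwise hlt, normalize_faces_of_not_pairwise hle hlt]

lemma normalize_pushforward {W : Type*} [PartialOrder W] {f : V → W}
    (hf : ∀ v w, f v < f w ↔ v < w) (z : OrderedChain V) :
    normalize (pushforward f z) = pushforward f (normalize z) := by
  suffices h : normalize ∘ₗ pushforward f = pushforward f ∘ₗ normalize from LinearMap.congr_fun h z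
  refine chain_hom_ext fun l => ?_
  have hmap : (l.map f).Pairwise (· > ·) ↔ l.Pairwise (· > ·) := by
    simp only [List.pairwise_map, gt_iff_lt, hf]
  by_cases hl : l.Pairwise (· > ·)
  · simp [normalize_single_of_pairwise hl, normalize_single_of_pairwise (hmap.2 hl)]
  · simp [normalize_single_of_not_pairwise hl, normalize_single_of_not_pairwise (mt hmap.1 hl)]

end Normalization

section Labels

variable {G X ι : Type*} [Group G] [MulAction G X] {f : X → ι → ℝ}

/-- Encodes which translates of a point are extreme: if the `j`-th coordinate of `f` oscillates over
the orbit of `x` at least as much as every other coordinate, then `peaks f x j` is the set of those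
`g` for which it is maximal at `g⁻¹ • x`; otherwise `peaks f x j` is empty. -/
def peaks (f : X → ι → ℝ) (x : X) (j : ι) : Set G :=
  {g | ∃ b : G, ∀ (k : ι) (a c : G),
    f (a⁻¹ • x) k - f (c⁻¹ • x) k ≤ f (g⁻¹ • x) j - f (b⁻¹ • x) j}

lemma peaks_smul (h : G) (x : X) : peaks (G := G) f (h • x) = h • peaks f x := by
  ext j g
  have hinv : ∀ a : G, (h⁻¹ * a)⁻¹ • x = a⁻¹ • h • x := fun a => by
    rw [mul_inv_rev, inv_inv, mul_smul]
  rw [Pi.smul_apply, Set.mem_smul_set_iff_inv_smul_mem, smul_eq_mul]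
  refine Equiv.exists_congr (Equiv.mulLeft h⁻¹) fun b => forall_congr' fun k =>
    Equiv.forall_congr (Equiv.mulLeft h⁻¹) fun {a} =>
      Equiv.forall_congr (Equiv.mulLeft h⁻¹) fun {c} => ?_
  simp only [Equiv.coe_mulLeft, hinv]

lemma isClosed_setOf_mem_peaks [Finite G] [TopologicalSpace X] [ContinuousConstSMul G X]
    (hf : Continuous f) (j : ι) (g : G) : IsClosed {y | g ∈ peaks f y j} := by
  have heval : ∀ (k : ι) (a : G), Continuous fun y => f (a⁻¹ • y) k := fun k a =>
    (continuous_apply k).comp (hf.comp (continuous_const_smul a⁻¹))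
  have hset : {y | g ∈ peaks f y j} = ⋃ b : G, ⋂ (k : ι) (a : G) (c : G),
      {y | f (a⁻¹ • y) k - f (c⁻¹ • y) k ≤ f (g⁻¹ • y) j - f (b⁻¹ • y) j} := by
    ext y
    simp [peaks]
  rw [hset]
  exact isClosed_iUnion_of_finite fun b => isClosed_iInter fun k => isClosed_iInter fun a =>
    isClosed_iInter fun c =>
      isClosed_le ((heval k a).sub (heval k c)) ((heval j g).sub (heval j b))

lemma isOpen_setOf_peaks_le [Finite G] [Finite ι] [TopologicalSpace X] [ContinuousConstSMul G X]
    (hf : Continuous f) (x : X) : IsOpen {y | peaks (G := G) f y ≤ peaks f x} := by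
  have hset : {y | peaks (G := G) f y ≤ peaks f x} =
      ⋂ (j : ι) (g : G) (_ : g ∉ peaks f x j), {y | g ∈ peaks f y j}ᶜ := by
    ext y
    simp only [Set.mem_ofPred_eq, Pi.le_def, Set.subset_def, Set.mem_iInter, Set.mem_compl_iff]
    exact forall₂_congr fun j g => not_imp_not.symm
  rw [hset]
  exact isOpen_iInter_of_finite fun j => isOpen_iInter_of_finite fun g =>
    isOpen_iInter_of_finite fun _ => (isClosed_setOf_mem_peaks hf j g).isOpen_compl

lemma exists_peaks_nonempty [Finite G] [Finite ι] [Nonempty ι] (x : X) :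
    ∃ j, (peaks (G := G) f x j).Nonempty := by
  obtain ⟨⟨j, g, b⟩, hmax⟩ :=
    Finite.exists_max fun p : ι × G × G => f (p.2.1⁻¹ • x) p.1 - f (p.2.2⁻¹ • x) p.1
  exact ⟨j, g, b, fun k a c => hmax (k, a, c)⟩

lemma peaks_ne_univ [Finite G] (hf : Function.Injective f) {x : X} (hx : ∃ g : G, g • x ≠ x)
    (j : ι) : peaks (G := G) f x j ≠ Set.univ := by
  intro huniv
  obtain ⟨g, hg⟩ := hx
  obtain ⟨k, hk⟩ := Function.ne_iff.1 (hf.ne hg)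
  obtain ⟨a, hmin⟩ := Finite.exists_min fun a : G => f (a⁻¹ • x) j
  obtain ⟨b, hb⟩ : a ∈ peaks f x j := huniv ▸ Set.mem_univ a
  have h₁ := hb k g⁻¹ 1
  have h₂ := hb k 1 g⁻¹
  have h₃ := hmin b
  simp only [inv_inv, inv_one, one_smul] at h₁ h₂
  exact hk (by linarith)

/-- The label of a simplex, a vertex of the finite `G`-poset `ι → Set G`: the union of the peak
sets of its vertices. -/
def label (f : X → ι → ℝ) (l : List X) : ι → Set G := ⨆ x ∈ l, peaks f x

lemma mem_label {l : List X} {j : ι} {g : G} : g ∈ label f l j ↔ ∃ x ∈ l, g ∈ peaks f x j := by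
  simp [label]

lemma label_map_smul (h : G) (l : List X) : label (G := G) f (l.map (h • ·)) = h • label f l := by
  ext j g
  simp [mem_label, peaks_smul, Set.mem_smul_set_iff_inv_smul_mem]

lemma label_mono {s l : List X} (h : s ⊆ l) : label (G := G) f s ≤ label f l :=
  biSup_mono fun _ hx => h hx

lemma stabilizer_eq_bot_of_prime_card [hp : Fact (Nat.card G).Prime] {B : ι → Set G} {j : ι}
    (hne : (B j).Nonempty) (huniv : B j ≠ Set.univ) : MulAction.stabilizer G B = ⊥ := by
  refine (Subgroup.eq_bot_or_eq_top_of_prime_card _).resolve_right fun htop => huniv ?_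
  obtain ⟨g, hg⟩ := hne
  refine Set.eq_univ_of_forall fun h => ?_
  have hstab : h * g⁻¹ ∈ MulAction.stabilizer G B := htop ▸ Subgroup.mem_top _
  rw [← congrFun (MulAction.mem_stabilizer_iff.1 hstab) j]
  exact ⟨g, hg, by simp⟩

lemma stabilizer_label_eq_bot [hp : Fact (Nat.card G).Prime] [Finite ι] [Nonempty ι]
    (hf : Function.Injective f) {z : X} (hz : ∃ g : G, g • z ≠ z) {l : List X} (hl : l ≠ [])
    (h : ∀ x ∈ l, peaks (G := G) f x ≤ peaks f z) :
    MulAction.stabilizer G (label (G := G) f l) = ⊥ := by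
  have : Finite G := Nat.finite_of_card_ne_zero hp.out.ne_zero
  obtain ⟨x, hx⟩ := List.exists_mem_of_ne_nil l hl
  obtain ⟨j, g, hg⟩ := exists_peaks_nonempty (G := G) (f := f) x
  have hle : label (G := G) f l ≤ peaks f z := iSup₂_le h
  exact stabilizer_eq_bot_of_prime_card ⟨g, mem_label.2 ⟨x, hx, hg⟩⟩ fun huniv =>
    peaks_ne_univ hf hz j (Set.univ_subset_iff.1 (huniv ▸ hle j))

lemma subdivision_label_mem_chainsOn {S : Set (List X)} {z : OrderedChain X} (hz : z ∈ chainsOn S) :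
    subdivision (label (G := G) f) z ∈ chainsOn {t | ∃ l ∈ S, t.length = l.length ∧
      t.Pairwise (· ≥ ·) ∧ ∀ B ∈ t, ∃ s ≠ [], s ⊆ l ∧ B = label f s} := by
  let R : List X → List (ι → Set G) → Prop := fun l t => t.length = l.length ∧
    t.Pairwise (· ≥ ·) ∧ ∀ B ∈ t, ∃ s ≠ [], s ⊆ l ∧ B = label f s
  refine subdivision_mem_chainsOn (R := R) (by simp [R]) ?_ (fun l hl t ht => ?_) hz
  swap
  · exact ⟨l, hl, ht⟩
  rintro l s t hl hs hlen ⟨hlen', hpw, hlab⟩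
  refine ⟨by rw [List.length_cons, hlen', hlen], List.pairwise_cons.2 ⟨fun B hB => ?_, hpw⟩,
    List.forall_mem_cons.2 ⟨⟨l, hl, List.Subset.refl l, rfl⟩, fun B hB => ?_⟩⟩
  all_goals obtain ⟨u, hu, hus, rfl⟩ := hlab B hB
  · exact label_mono (List.Subset.trans hus hs.subset)
  · exact ⟨u, hu, List.Subset.trans hus hs.subset, rfl⟩

/- Labelling sends the tower to the order complex of `ι → Set G`, a complex of finite dimension
on whose relevant vertices `G` acts freely. -/
theorem not_isTower_of_small [Fintype G] [hp : Fact (Nat.card G).Prime] [Finite ι] [Nonempty ι]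
    (hf : Function.Injective f) (hmove : ∀ x : X, ∃ g : G, g • x ≠ x) {γ : G}
    (hγ : ∀ g, g ∈ Subgroup.zpowers γ) {m : ℕ} (hm : Nat.card (ι → Set G) ≤ m)
    {c : ℕ → OrderedChain X}
    (hc : ∀ n ≤ m, c n ∈ chainsOn {l | l.length = n + 1 ∧
      ∃ z, ∀ x ∈ l, peaks (G := G) f x ≤ peaks f z}) : ¬IsTower γ m c := by
  intro htower
  have hlabel := fun n hn => subdivision_label_mem_chainsOn (G := G) (f := f) (hc n hn)
  have htower' : IsTower γ m fun n => subdivision (label (G := G) f) (c n) :=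
    htower.map (subdivision_nil _) (fun n _ => boundary_subdivision _ _)
      fun n _ g => subdivision_pushforward (label_map_smul g) (c n)
  have htower'' : IsTower γ m fun n => normalize (subdivision (label (G := G) f) (c n)) := by
    refine htower'.map ?_ (fun n hn => ?_) fun n _ g => ?_
    · exact normalize_single_of_pairwise List.Pairwise.nil
    · exact boundary_normalize (Finsupp.supported_mono (fun t ht => ht.choose_spec.2.2.1)
        (hlabel n hn))
    · refine normalize_pushforward (fun v w => ?_) _
      simp [lt_iff_le_not_ge, Pi.le_def, Set.smul_set_subset_smul_set_iff]
  have hfree : ∀ n ≤ m, normalize (subdivision (label (G := G) f) (c n)) ∈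
      chainsOn (freeSimplices G (ι → Set G) n) := by
    intro n hn
    refine Finsupp.supported_mono ?_ (normalize_mem_chainsOn (hlabel n hn))
    rintro t ⟨⟨l, ⟨hlen, z, hz⟩, hlen', -, hlab⟩, hgt⟩
    refine ⟨hlen'.trans hlen, hgt.imp ne_of_gt, fun B hB => ?_⟩
    obtain ⟨s, hs, hsl, rfl⟩ := hlab B hB
    exact stabilizer_label_eq_bot hf (hmove z) hs fun x hx => hz x (hsl hx)
  have hcard := htower''.card_eq_one hγ hm hfree
  exact hp.out.ne_one (by rw [Nat.card_eq_fintype_card, hcard])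

end Labels

section Barycentric

variable {E F : Type*} [NormedAddCommGroup E] [NormedSpace ℝ E] [AddCommGroup F] [Module ℝ F]

/-- The barycentre of a list of points, the centre used for barycentric subdivision. It takes the
junk value `0` on the empty list. -/
def barycentre (l : List F) : F := (l.length : ℝ)⁻¹ • l.sum

lemma length_smul_barycentre (l : List F) : (l.length : ℝ) • barycentre l = l.sum := by
  rcases eq_or_ne l [] with rfl | hl
  · simp
  · exact smul_inv_smul₀ (by simpa using hl) _

lemma barycentre_map {F' : Type*} [AddCommGroup F'] [Module ℝ F'] (A : F →ₗ[ℝ] F') (l : List F) :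
    barycentre (l.map A) = A (barycentre l) := by
  simp [barycentre, map_list_sum]

lemma barycentre_eq_of_perm {l l' : List F} (h : l.Perm l') : barycentre l = barycentre l' := by
  rw [barycentre, barycentre, h.length_eq, h.sum_eq]

lemma barycentre_mem {S : Set F} (hS : Convex ℝ S) {l : List F} (hl : l ≠ [])
    (h : ∀ x ∈ l, x ∈ S) : barycentre l ∈ S := by
  have hsum : barycentre l = ∑ i : Fin l.length, (l.length : ℝ)⁻¹ • l[i] := by
    rw [← Finset.smul_sum, barycentre]
    simp
  rw [hsum]
  refine hS.sum_mem (fun _ _ => by positivity) ?_ fun i _ => h _ (List.getElem_mem _)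
  simp [hl]

lemma dist_barycentre_cons (x : E) (t : List E) :
    dist x (barycentre (x :: t)) = (1 - ((x :: t).length : ℝ)⁻¹) * dist x (barycentre t) := by
  have hlen : ((x :: t).length : ℝ) = t.length + 1 := by simp
  have : (0 : ℝ) < t.length + 1 := by positivity
  have h : x - barycentre (x :: t) = (1 - ((x :: t).length : ℝ)⁻¹) • (x - barycentre t) := by
    rw [barycentre, hlen, List.sum_cons, ← length_smul_barycentre t]
    match_scalars <;> field_simp
    ring
  have hnonneg : 0 ≤ 1 - ((x :: t).length : ℝ)⁻¹ := by
    rw [hlen, sub_nonneg]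
    exact inv_le_one_of_one_le₀ (by simp)
  rw [dist_eq_norm, dist_eq_norm, h, norm_smul, Real.norm_of_nonneg hnonneg]

lemma dist_barycentre_le {d : ℝ} {l : List E} {L : ℕ} (hL : l.length ≤ L) {x : E} (hx : x ∈ l)
    (h : ∀ y ∈ l, dist x y ≤ d) : dist x (barycentre l) ≤ (1 - (L : ℝ)⁻¹) * d := by
  classical
  have hd : 0 ≤ d := dist_nonneg.trans (h x hx)
  have hperm := List.perm_cons_erase hx
  have hle : 1 - (l.length : ℝ)⁻¹ ≤ 1 - (L : ℝ)⁻¹ := by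
    have : (0 : ℝ) < l.length := by exact_mod_cast List.length_pos_of_mem hx
    gcongr
  have hnonneg : 0 ≤ 1 - (l.length : ℝ)⁻¹ :=
    sub_nonneg.2 (inv_le_one_of_one_le₀ (by exact_mod_cast List.length_pos_of_mem hx))
  rw [barycentre_eq_of_perm hperm, dist_barycentre_cons, ← hperm.length_eq]
  rcases eq_or_ne (l.erase x) [] with hnil | hne
  · rw [hperm.length_eq, hnil]
    simpa using mul_nonneg (hnonneg.trans hle) hd
  · have hball : barycentre (l.erase x) ∈ Metric.closedBall x d :=
      barycentre_mem (convex_closedBall x d) hne fun y hy =>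
        Metric.mem_closedBall'.2 (h y (List.mem_of_mem_erase hy))
    gcongr
    exacts [hnonneg.trans hle, Metric.mem_closedBall'.1 hball]

lemma subdivision_barycentre_mem_chainsOn {𝓕 : Set (Set E)} (h𝓕 : ∀ S ∈ 𝓕, Convex ℝ S) {d : ℝ}
    {n L : ℕ} (hL : n ≤ L) {z : OrderedChain E} (hz : z ∈ chainsOn {l | l.length = n ∧
      (∃ S ∈ 𝓕, ∀ x ∈ l, x ∈ S) ∧ ∀ x ∈ l, ∀ y ∈ l, dist x y ≤ d}) :
    subdivision barycentre z ∈ chainsOn {l | l.length = n ∧ (∃ S ∈ 𝓕, ∀ x ∈ l, x ∈ S) ∧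
      ∀ x ∈ l, ∀ y ∈ l, dist x y ≤ (1 - (L : ℝ)⁻¹) * d} := by
  let R : List E → List E → Prop := fun l t => l.length ≤ L → t.length = l.length ∧
    ∀ S, Convex ℝ S → (∀ x ∈ l, x ∈ S) → (∀ x ∈ l, ∀ y ∈ l, dist x y ≤ d) →
      (∀ x ∈ t, x ∈ S) ∧ ∀ x ∈ t, ∀ y ∈ t, dist x y ≤ (1 - (L : ℝ)⁻¹) * d
  refine subdivision_mem_chainsOn (R := R) (by simp [R]) ?_ ?_ hz
  · intro l s t hl hs hlen hst hlL
    obtain ⟨htlen, ht⟩ := hst (by omega)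
    refine ⟨by rw [List.length_cons, htlen, hlen], fun S hS hlS hd => ?_⟩
    have hr : ∀ x ∈ l, dist x (barycentre l) ≤ (1 - (L : ℝ)⁻¹) * d := fun x hx =>
      dist_barycentre_le hlL hx (hd x hx)
    obtain ⟨htS, htd⟩ := ht (S ∩ Metric.closedBall (barycentre l) ((1 - (L : ℝ)⁻¹) * d))
      (hS.inter (convex_closedBall _ _)) (fun x hx => ⟨hlS x (hs.subset hx), hr x (hs.subset hx)⟩)
      fun x hx y hy => hd x (hs.subset hx) y (hs.subset hy)
    obtain ⟨v, hv⟩ := List.exists_mem_of_ne_nil l hl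
    refine ⟨List.forall_mem_cons.2 ⟨barycentre_mem hS hl hlS, fun x hx => (htS x hx).1⟩,
      List.forall_mem_cons.2 ⟨List.forall_mem_cons.2 ⟨?_, fun y hy => ?_⟩, fun x hx =>
        List.forall_mem_cons.2 ⟨(htS x hx).2, htd x hx⟩⟩⟩
    · rw [dist_self]
      exact dist_nonneg.trans (hr v hv)
    · exact Metric.mem_closedBall'.1 (htS y hy).2
  · rintro l ⟨hlen, ⟨S, hS, hlS⟩, hd⟩ t ht
    obtain ⟨htlen, ht⟩ := ht (hlen.trans_le hL)
    obtain ⟨htS, htd⟩ := ht S (h𝓕 S hS) hlS hd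
    exact ⟨htlen.trans hlen, ⟨S, hS, htS⟩, htd⟩

end Barycentric

section ConeTower

variable {G Y : Type*} [Group G] [MulAction G Y] [Fintype G]

/-- The tower in a complex with a vertex `v n` for each `n`, obtained by coning: the simplices of
its `n`-th term have the form `φ 0 • v 0, …, φ n • v n` up to order. -/
def coneTower (γ : G) (v : ℕ → Y) : ℕ → OrderedChain Y
  | 0 => Finsupp.single [v 0] 1
  | n + 1 => cone (v (n + 1)) (periodic chainRep γ n (coneTower γ v n))

lemma boundary_periodic_coneTower (γ : G) (v : ℕ → Y) (n : ℕ) :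
    boundary (periodic chainRep γ n (coneTower γ v n)) = 0 := by
  induction n with
  | zero => simp [coneTower, faces, periodic_of_even]
  | succ n ih =>
    rw [boundary_periodic, coneTower, boundary_cone, ih, map_zero, sub_zero, periodic_succ_periodic]

lemma isTower_coneTower (γ : G) (v : ℕ → Y) (m : ℕ) : IsTower γ m (coneTower γ v) := by
  refine ⟨by simp [coneTower, faces], fun n _ => ?_⟩
  rw [coneTower, boundary_cone, boundary_periodic_coneTower, map_zero, sub_zero]

lemma coneTower_mem_chainsOn (γ : G) (v : ℕ → Y) (n : ℕ) :
    coneTower γ v n ∈ chainsOn {l | l.length = n + 1 ∧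
      ∃ φ : ℕ → G, ∀ y ∈ l, ∃ i ≤ n, y = φ i • v i} := by
  induction n with
  | zero => exact Finsupp.single_mem_supported ℤ 1 ⟨rfl, 1, by simp⟩
  | succ n ih =>
    refine cone_mem_chainsOn (S := {l | l.length = n + 1 ∧
      ∃ φ : ℕ → G, ∀ y ∈ l, ∃ i ≤ n, y = φ i • v i}) ?_
      (periodic_mem (fun g => pushforward_mem_chainsOn ?_ ih) n)
    · rintro l ⟨hlen, φ, hφ⟩
      refine ⟨by rw [List.length_cons, hlen], Function.update φ (n + 1) 1,
        List.forall_mem_cons.2 ⟨⟨n + 1, le_rfl, by simp⟩, fun y hy => ?_⟩⟩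
      obtain ⟨i, hi, rfl⟩ := hφ y hy
      exact ⟨i, by omega, by rw [Function.update_of_ne (by omega)]⟩
    · rintro l ⟨hlen, φ, hφ⟩
      refine ⟨by rw [List.length_map, hlen], fun i => g * φ i, List.forall_mem_map.2 fun y hy => ?_⟩
      obtain ⟨i, hi, rfl⟩ := hφ y hy
      exact ⟨i, hi, (mul_smul ..).symm⟩

end ConeTower

section Join

variable {κ G : Type*}

/-- The closed simplex of the join of copies of `G` with vertices `(i, φ i)`. -/
def joinFace [Fintype κ] [Fintype G] (φ : κ → G) : Set (κ × G → ℝ) :=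
  {w ∈ stdSimplex ℝ (κ × G) | ∀ i g, g ≠ φ i → w (i, g) = 0}

lemma convex_joinFace [Fintype κ] [Fintype G] (φ : κ → G) : Convex ℝ (joinFace φ) := by
  refine (convex_stdSimplex ℝ _).inter fun w hw w' hw' a b _ _ _ i g hg => ?_
  simp [hw i g hg, hw' i g hg]

lemma dist_le_one_of_mem_joinFace [Fintype κ] [Fintype G] {φ : κ → G} {w w' : κ × G → ℝ}
    (hw : w ∈ joinFace φ) (hw' : w' ∈ joinFace φ) : dist w w' ≤ 1 :=
  (Metric.dist_le_diam_of_mem (bounded_stdSimplex _) hw.1 hw'.1).trans diam_stdSimplex_le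

lemma single_mem_joinFace [Fintype κ] [Fintype G] [DecidableEq κ] [DecidableEq G] (φ : κ → G)
    (i : κ) : Pi.single (i, φ i) 1 ∈ joinFace φ := by
  refine ⟨single_mem_stdSimplex ℝ _, fun j g hg => Pi.single_eq_of_ne ?_ _⟩
  rintro ⟨⟩
  exact hg rfl

variable [Group G]

/-- The action of `G` by left translation on the functions on `κ × G`. The standard simplex
contains the join of copies of `G` indexed by `κ` as an invariant subset. -/
local instance joinAction : MulAction G (κ × G → ℝ) where
  smul h w := LinearMap.funLeft ℝ ℝ (fun p => (p.1, h⁻¹ * p.2)) w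
  one_smul w := funext fun p => congrArg w (by simp)
  mul_smul g h w := funext fun p => congrArg w (by simp [mul_assoc])

lemma join_smul_apply (h : G) (w : κ × G → ℝ) (i : κ) (g : G) : (h • w) (i, g) = w (i, h⁻¹ * g) :=
  rfl

lemma join_smul_single [DecidableEq κ] [DecidableEq G] (h : G) (i : κ) (g : G) (t : ℝ) :
    h • (Pi.single (i, g) t : κ × G → ℝ) = Pi.single (i, h * g) t := by
  ext ⟨j, k⟩
  simp [join_smul_apply, Pi.single_apply, inv_mul_eq_iff_eq_mul]

variable [Fintype G]

lemma exists_small_tower_pow (γ : G) (m N : ℕ) :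
    ∃ c : ℕ → OrderedChain (Fin (m + 1) × G → ℝ), IsTower γ m c ∧
      ∀ n ≤ m, c n ∈ chainsOn {l | l.length = n + 1 ∧
        (∃ S ∈ Set.range (joinFace (κ := Fin (m + 1)) (G := G)), ∀ w ∈ l, w ∈ S) ∧
        ∀ w ∈ l, ∀ w' ∈ l, dist w w' ≤ (1 - ((m + 1 : ℕ) : ℝ)⁻¹) ^ N} := by
  classical
  induction N with
  | zero =>
    let v : ℕ → Fin (m + 1) × G → ℝ := fun i => Pi.single (Fin.ofNat (m + 1) i, 1) 1
    refine ⟨coneTower γ v, isTower_coneTower γ v m, fun n hn =>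
      Finsupp.supported_mono ?_ (coneTower_mem_chainsOn γ v n)⟩
    rintro l ⟨hlen, φ, hφ⟩
    have hmem : ∀ w ∈ l, w ∈ joinFace fun i : Fin (m + 1) => φ i := by
      intro w hw
      obtain ⟨i, hi, rfl⟩ := hφ w hw
      have hval : (Fin.ofNat (m + 1) i : ℕ) = i := Nat.mod_eq_of_lt (by omega)
      convert single_mem_joinFace (fun i : Fin (m + 1) => φ i) (Fin.ofNat (m + 1) i)
      rw [join_smul_single, mul_one, hval]
    refine ⟨hlen, ⟨_, ⟨_, rfl⟩, hmem⟩, fun w hw w' hw' => ?_⟩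
    simpa using dist_le_one_of_mem_joinFace (hmem w hw) (hmem w' hw')
  | succ N ih =>
    obtain ⟨c, hc, hmem⟩ := ih
    refine ⟨fun n => subdivision barycentre (c n), hc.map (subdivision_nil _)
      (fun n _ => boundary_subdivision _ _)
      fun n _ g => subdivision_pushforward (barycentre_map (LinearMap.funLeft ℝ ℝ _)) (c n),
      fun n hn => ?_⟩
    rw [pow_succ']
    refine subdivision_barycentre_mem_chainsOn ?_ (by omega) (hmem n hn)
    rintro _ ⟨φ, rfl⟩
    exact convex_joinFace φ

theorem exists_small_tower (γ : G) (m : ℕ) {ε : ℝ} (hε : 0 < ε) :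
    ∃ c : ℕ → OrderedChain (Fin (m + 1) × G → ℝ), IsTower γ m c ∧
      ∀ n ≤ m, c n ∈ chainsOn {l | l.length = n + 1 ∧
        (∃ φ : Fin (m + 1) → G, ∀ w ∈ l, w ∈ joinFace φ) ∧
        ∀ w ∈ l, ∀ w' ∈ l, dist w w' < ε} := by
  have hinv : (0 : ℝ) < ((m + 1 : ℕ) : ℝ)⁻¹ := by positivity
  obtain ⟨N, hN⟩ := exists_pow_lt_of_lt_one hε (y := 1 - ((m + 1 : ℕ) : ℝ)⁻¹) (by linarith)
  obtain ⟨c, hc, hmem⟩ := exists_small_tower_pow γ m N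
  refine ⟨c, hc, fun n hn => Finsupp.supported_mono ?_ (hmem n hn)⟩
  rintro l ⟨hlen, ⟨_, ⟨φ, rfl⟩, hφ⟩, hdist⟩
  exact ⟨hlen, ⟨φ, hφ⟩, fun w hw w' hw' => (hdist w hw w' hw').trans_lt hN⟩

end Join

section JoinMap

variable {α W G X κ : Type*}

lemma continuous_foldr [TopologicalSpace W] [TopologicalSpace X] {T : α → W → X → X}
    (hT : ∀ a, Continuous fun p : W × X => T a p.1 p.2) (l : List α) :
    Continuous fun p : W × X => l.foldr (fun a => T a p.1) p.2 := by
  induction l with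
  | nil => exact continuous_snd
  | cons a l ih => exact (hT a).comp (continuous_fst.prodMk ih)

lemma foldr_eq_of_forall_ne {T : α → X → X} {a : α} (hT : ∀ b ≠ a, ∀ x, T b x = x) {l : List α}
    (hl : l.Nodup) (ha : a ∈ l) (x : X) : l.foldr T x = T a x := by
  obtain ⟨s, t, rfl⟩ := List.append_of_mem ha
  have hid : ∀ r : List α, a ∉ r → ∀ y, r.foldr T y = y := fun r hr y =>
    List.foldrRecOn (motive := (· = y)) r T rfl fun z hz b hb =>
      (hT b (ne_of_mem_of_not_mem hb hr) z).trans hz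
  simp only [List.nodup_append, List.nodup_cons] at hl
  rw [List.foldr_append, List.foldr_cons, hid t hl.2.1.1, hid s fun h => hl.2.2 a h a (by simp) rfl]

lemma foldr_eq_smul_foldr [SMul G X] {T T' : α → X → X} {h : G}
    (hT : ∀ a x, T' a (h • x) = h • T a x) {a : α} (hconst : ∀ x x', T' a x = T' a x')
    {l : List α} (ha : a ∈ l) (x : X) : l.foldr T' x = h • l.foldr T x := by
  induction l with
  | nil => simp at ha
  | cons b l ih =>
    rcases List.mem_cons.1 ha with rfl | ha
    · rw [List.foldr_cons, List.foldr_cons, ← hT, hconst]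
    · rw [List.foldr_cons, List.foldr_cons, ih ha, hT]

variable [Group G] [MulAction G X] [TopologicalSpace X] {x₀ : X}
  (H : (ContinuousMap.id X).Homotopy (ContinuousMap.const X x₀))

/-- The contraction of `X` to `g • x₀` conjugate by `g` to a contraction `H` to `x₀`. -/
def contract (g : G) (s : unitInterval) (x : X) : X := g • H (s, g⁻¹ • x)

lemma contract_zero (g : G) (x : X) : contract H g 0 x = x := by
  simp [contract]

lemma contract_one (g : G) (x : X) : contract H g 1 x = g • x₀ := by
  simp [contract]

lemma contract_mul_smul (h g : G) (s : unitInterval) (x : X) :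
    contract H (h * g) s (h • x) = h • contract H g s x := by
  simp [contract, mul_smul]

variable [Fintype κ] [Fintype G]

/-- The weights `w (i, g)` contracting `X` to the points `g • x₀` in turn. They are scaled so that
a contraction is complete as soon as its weight is the average one. -/
def joinStep (w : κ × G → ℝ) (i : κ) (x : X) : X :=
  (Finset.univ : Finset G).toList.foldr
    (fun g => contract H g (Set.projIcc 0 1 zero_le_one (Fintype.card (κ × G) * w (i, g)))) x

/-- A map from the join of copies of `G` to `X`, which contracts `x₀` along one copy after the
other. It is equivariant on each face of the join. -/
def joinMap (w : κ × G → ℝ) : X := (Finset.univ : Finset κ).toList.foldr (joinStep H w) x₀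

lemma continuous_joinMap [ContinuousConstSMul G X] :
    Continuous (joinMap H : (κ × G → ℝ) → X) := by
  have hstep : ∀ i : κ, Continuous fun p : (κ × G → ℝ) × X => joinStep H p.1 i p.2 := fun i =>
    continuous_foldr (T := fun g (w : κ × G → ℝ) => contract H g
      (Set.projIcc 0 1 zero_le_one (Fintype.card (κ × G) * w (i, g))))
      (fun g => by unfold contract; fun_prop) _
  exact (continuous_foldr (T := fun i w => joinStep H w i) hstep _).comp
    (continuous_id.prodMk continuous_const)

variable {H}

lemma joinStep_eq {w : κ × G → ℝ} {i : κ} {a : G} (hw : ∀ g ≠ a, w (i, g) = 0) (x : X) :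
    joinStep H w i x =
      contract H a (Set.projIcc 0 1 zero_le_one (Fintype.card (κ × G) * w (i, a))) x := by
  refine foldr_eq_of_forall_ne (fun g hg y => ?_) (Finset.nodup_toList _) (by simp) x
  rw [hw g hg, mul_zero, Set.projIcc_left]
  exact contract_zero H g y

attribute [local instance] joinAction

lemma joinStep_smul {w : κ × G → ℝ} {i : κ} {a : G} (hw : ∀ g ≠ a, w (i, g) = 0) (h : G) (x : X) :
    joinStep H (h • w) i x =
      contract H (h * a) (Set.projIcc 0 1 zero_le_one (Fintype.card (κ × G) * w (i, a))) x := by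
  have hw' : ∀ g ≠ h * a, (h • w) (i, g) = 0 := fun g hg =>
    hw _ fun hga => hg (inv_mul_eq_iff_eq_mul.1 hga)
  rw [joinStep_eq hw', join_smul_apply, inv_mul_cancel_left]

lemma exists_one_le_card_mul_of_mem_stdSimplex {ι : Type*} [Fintype ι] {w : ι → ℝ}
    (hw : w ∈ stdSimplex ℝ ι) : ∃ i, 1 ≤ Fintype.card ι * w i := by
  by_contra! hlt
  have hne : (Finset.univ : Finset ι).Nonempty :=
    Finset.nonempty_of_sum_ne_zero (hw.2.trans_ne one_ne_zero)
  have hsum := Finset.sum_lt_sum_of_nonempty hne fun i _ => hlt i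
  simp [← Finset.mul_sum, hw.2] at hsum

lemma joinMap_smul {φ : κ → G} {w : κ × G → ℝ} (hw : w ∈ joinFace φ) (h : G) :
    joinMap H (h • w) = h • joinMap H w := by
  obtain ⟨⟨i, g⟩, hig⟩ := exists_one_le_card_mul_of_mem_stdSimplex hw.1
  obtain rfl : g = φ i := by
    by_contra hg
    rw [hw.2 i g hg, mul_zero] at hig
    exact not_le_of_gt one_pos hig
  refine foldr_eq_smul_foldr (a := i) (fun j x => ?_) (fun x x' => ?_) (by simp) x₀
  · rw [joinStep_smul (hw.2 j), joinStep_eq (hw.2 j), contract_mul_smul]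
  · rw [joinStep_smul (hw.2 i), joinStep_smul (hw.2 i), Set.projIcc_of_right_le _ hig]
    exact (contract_one H _ x).trans (contract_one H _ x').symm

end JoinMap

section Contractible

variable {G X : Type*} [Group G] [TopologicalSpace X] [ContractibleSpace X] [MulAction G X]
  [ContinuousConstSMul G X]

attribute [local instance] joinAction

theorem exists_isTower_subordinate [Fintype G] {ι : Type*} {U : ι → Set X}
    (hU : ∀ i, IsOpen (U i)) (hcover : ∀ x, ∃ i, x ∈ U i) (γ : G) (m : ℕ) :
    ∃ c : ℕ → OrderedChain X, IsTower γ m c ∧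
      ∀ n ≤ m, c n ∈ chainsOn {l | l.length = n + 1 ∧ ∃ i, ∀ x ∈ l, x ∈ U i} := by
  obtain ⟨x₀, ⟨H⟩⟩ := id_nullhomotopic X
  obtain ⟨δ, hδ, hball⟩ := lebesgue_number_lemma_of_metric
    (isCompact_stdSimplex ℝ (Fin (m + 1) × G))
    (fun i => (hU i).preimage (continuous_joinMap H))
    fun w _ => Set.mem_iUnion.2 (hcover (joinMap H w))
  obtain ⟨c, hc, hmem⟩ := exists_small_tower γ m hδ
  refine ⟨fun n => pushforward (joinMap H) (c n),
    hc.map (by simp) (fun n _ => (pushforward_boundary _ _).symm) fun n hn g => ?_,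
    fun n hn => pushforward_mem_chainsOn (fun l hl => ?_) (hmem n hn)⟩
  · rw [chainRep_apply, chainRep_apply, pushforward_pushforward, pushforward_pushforward]
    refine pushforward_congr (fun l hl w hw => ?_) (hmem n hn)
    obtain ⟨-, ⟨φ, hφ⟩, -⟩ := hl
    exact joinMap_smul (hφ w hw) g
  · obtain ⟨hlen, ⟨φ, hφ⟩, hdist⟩ := hl
    obtain ⟨w, hw⟩ := List.exists_mem_of_length_pos (n.succ_pos.trans_eq hlen.symm)
    obtain ⟨i, hi⟩ := hball w (hφ w hw).1
    exact ⟨by rw [List.length_map, hlen], i,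
      List.forall_mem_map.2 fun w' hw' => hi (hdist w' hw' w hw)⟩

theorem exists_ne_one_smul_eq_of_prime_card [Fact (Nat.card G).Prime] {ι : Type*} [Finite ι]
    {f : X → ι → ℝ} (hf : Continuous f) (hinj : Function.Injective f) :
    ∃ g : G, g ≠ 1 ∧ ∃ x : X, g • x = x := by
  by_contra! hfree
  have : Finite G := Nat.finite_of_card_ne_zero (Fact.out : (Nat.card G).Prime).ne_zero
  have := Fintype.ofFinite G
  have : Nontrivial G := Finite.one_lt_card_iff_nontrivial.1 (Fact.out : (Nat.card G).Prime).one_lt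
  obtain ⟨γ, hγ⟩ := exists_ne (1 : G)
  have hmove : ∀ x : X, γ • x ≠ x := hfree γ hγ
  have : Nonempty ι := by
    obtain ⟨x⟩ := (inferInstance : Nonempty X)
    obtain ⟨j, -⟩ := Function.ne_iff.1 (hinj.ne (hmove x))
    exact ⟨j⟩
  obtain ⟨c, hc, hmem⟩ := exists_isTower_subordinate (isOpen_setOf_peaks_le (G := G) hf)
    (fun x => ⟨x, le_refl (peaks f x)⟩) γ (Nat.card (ι → Set G))
  exact not_isTower_of_small hinj (fun x => ⟨γ, hmove x⟩)
    (fun g => mem_zpowers_of_prime_card rfl hγ) le_rfl hmem hc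

end Contractible

end

end FiniteFreeAction

theorem finite_group_free_action_R3_trivial_general {G X ι : Type*} [Group G] [Finite G]
    [TopologicalSpace X] [ContractibleSpace X] [MulAction G X] [ContinuousConstSMul G X] [Finite ι]
    {f : X → ι → ℝ} (hf : Continuous f) (hinj : Function.Injective f)
    (hfree : ∀ (g : G) (x : X), g • x = x → g = 1) : ∀ g : G, g = 1 := by
  by_contra! hne
  have : Nontrivial G := nontrivial_of_ne _ _ hne.choose_spec
  obtain ⟨p, hp, hpG⟩ := Nat.exists_prime_and_dvd (Finite.one_lt_card (α := G)).ne'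
  have : Fact p.Prime := ⟨hp⟩
  obtain ⟨γ, hγ⟩ := exists_prime_orderOf_dvd_card' p hpG
  have : Fact (Nat.card (Subgroup.zpowers γ)).Prime := ⟨by rwa [Nat.card_zpowers, hγ]⟩
  have : ContinuousConstSMul (Subgroup.zpowers γ) X :=
    ⟨fun g => continuous_const_smul (g : G)⟩
  obtain ⟨g, hg, x, hx⟩ :=
    FiniteFreeAction.exists_ne_one_smul_eq_of_prime_card (G := Subgroup.zpowers γ) hf hinj
  exact hg (Subtype.ext (hfree g x hx))

/-- A finite group acting freely by homeomorphisms on Euclidean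
3-space is trivial.  (Equivalently, any group acting freely and properly
discontinuously by homeomorphisms on `ℝ³` is torsion-free.) -/
theorem finite_group_free_action_R3_trivial
    (G : Type*) [Group G] [Finite G]
    [MulAction G (EuclideanSpace ℝ (Fin 3))]
    (hcont : ∀ g : G, Continuous fun x : EuclideanSpace ℝ (Fin 3) => g • x)
    (hfree : ∀ (g : G) (x : EuclideanSpace ℝ (Fin 3)), g • x = x → g = 1) :
    ∀ g : G, g = 1 :=
  haveI : ContinuousConstSMul G (EuclideanSpace ℝ (Fin 3)) := ⟨hcont⟩
  finite_group_free_action_R3_trivial_general (PiLp.continuous_ofLp 2 _) (WithLp.ofLp_injective 2)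
    hfree
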